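/- Let X be a set and let 𝓚(X) ⊆ ℝ^{X×X} denote the set of kernels of hyperbolic type on X, with the topology of pointwise convergence. For K ∈ 𝓚(X), define its critical exponent t_K ∈ [1,∞] as the supremum of the set of t ∈ [1,∞) such that the pointwise power K^t is a kernel of hyperbolic type. Then: (a) the map K ↦ t_K is upper semicontinuous on 𝓚(X); (b) for every K ∈ 𝓚(X) with t_K < ∞, the kernel K^{t_K} is of hyperbolic type. -/

import Mathlib

/-- A kernel of hyperbolic type on a set `X`: symmetric, nonnegative, with diagonal `1`,
satisfying the hyperbolic Cauchy–Schwarz inequalities. -/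
def IsHypKernel {X : Type*} (K : X → X → ℝ) : Prop :=
  (∀ x y, K x y = K y x) ∧ (∀ x y, 0 ≤ K x y) ∧ (∀ x, K x x = 1) ∧
  ∀ (n : ℕ) (x₀ : X) (x : Fin n → X) (lam : Fin n → ℝ),
    (∑ i, ∑ j, lam i * lam j * K (x i) (x j)) ≤ (∑ k, lam k * K x₀ (x k)) ^ 2

/-- The critical exponent of a kernel: the supremum (in `[1,∞] ⊆ EReal`) of the
`t ∈ [1,∞)` for which the pointwise power `K^t` is of hyperbolic type. -/
noncomputable def critExp {X : Type*} (K : X → X → ℝ) : EReal :=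
  sSup {t : EReal | ∃ s : ℝ, t = (s : EReal) ∧ 1 ≤ s ∧
    IsHypKernel (fun x y => K x y ^ s)}

theorem hyp_isClosed {X : Type*} : IsClosed {K : X → X → ℝ | IsHypKernel K} := by
  have hc : ∀ x y : X, Continuous fun K : X → X → ℝ => K x y := fun x y =>
    (continuous_apply y).comp (continuous_apply x)
  simp only [IsHypKernel, Set.ofPred_and, Set.ofPred_forall]
  refine IsClosed.inter ?_ (IsClosed.inter ?_ (IsClosed.inter ?_ ?_))
  · exact isClosed_iInter fun x => isClosed_iInter fun y => isClosed_eq (hc _ _) (hc _ _)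
  · exact isClosed_iInter fun x => isClosed_iInter fun y => isClosed_le continuous_const (hc _ _)
  · exact isClosed_iInter fun x => isClosed_eq (hc _ _) continuous_const
  · refine isClosed_iInter fun n => isClosed_iInter fun x₀ => isClosed_iInter fun x =>
      isClosed_iInter fun l => isClosed_le ?_ ?_
    · exact continuous_finsetSum _ fun i _ => continuous_finsetSum _ fun j _ =>
        continuous_const.mul (hc _ _)
    · exact (continuous_finsetSum _ fun i _ => continuous_const.mul (hc _ _)).pow 2

theorem hyp_one_le {X : Type*} {K : X → X → ℝ} (h : IsHypKernel K) (x y : X) : 1 ≤ K x y := by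
  have h1 := h.2.2.2 1 x (fun _ => y) (fun _ => 1)
  have h2 := h.2.1 x y
  simp [h.2.2.1] at h1
  linarith [abs_of_nonneg h2]

theorem binom_sign (t : ℝ) (h0 : 0 ≤ t) (h1 : t ≤ 1) (k : ℕ) :
    Ring.choose t (k + 1) * (-1) ^ (k + 1) ≤ 0 := by
  have hrec : ∀ k : ℕ, Ring.choose t (k + 1) = Ring.choose t k * (t - k) / (k + 1) := by
    intro k
    rw [Ring.choose_eq_smul, Ring.choose_eq_smul, descPochhammer_succ_right,
      Polynomial.smeval_mul]
    simp only [Polynomial.smeval_sub, Polynomial.smeval_X, Polynomial.smeval_natCast,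
      Nat.factorial_succ]
    have : (k.factorial : ℝ) ≠ 0 := by positivity
    push_cast
    simp
    field_simp
  induction k with
  | zero => simpa using h0
  | succ k ih =>
    rw [hrec (k + 1)]
    have h2 : 0 ≤ ((k + 1 : ℕ) - t) / ((k + 1 : ℕ) + 1) := by
      apply div_nonneg
      · push_cast; have := k.cast_nonneg (α := ℝ); linarith
      · positivity
    have := mul_nonpos_of_nonpos_of_nonneg ih h2
    calc _ = Ring.choose t (k + 1) * (-1) ^ (k + 1) * (((k + 1 : ℕ) - t) / ((k + 1 : ℕ) + 1)) := by
          rw [pow_succ (-1 : ℝ) (k + 1)]; ring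
      _ ≤ 0 := this

theorem binom_hasSum (t m : ℝ) (hm : |m| < 1) :
    HasSum (fun k : ℕ => Ring.choose t k * (-1) ^ k * m ^ k) ((1 - m) ^ t) := by
  have h := (Real.one_add_rpow_hasFPowerSeriesOnBall_zero (a := t)).hasSum (y := -m) (by
    simp [enorm_eq_nnnorm]
    rw [← NNReal.coe_lt_coe]; simpa using hm)
  simp only [binomialSeries_apply, zero_add, List.ofFn_const, List.prod_replicate,
    smul_eq_mul] at h
  have e : (fun k : ℕ => Ring.choose t k * (-1) ^ k * m ^ k) =
      fun k : ℕ => Ring.choose t k * (-m) ^ k := by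
    funext k; rw [neg_pow m]; ring
  rw [e, sub_eq_add_neg]
  exact h

theorem psd_pow {n : ℕ} (A : Matrix (Fin n) (Fin n) ℝ) (hA : A.PosSemidef) (k : ℕ) :
    (Matrix.of fun i j => A i j ^ (k + 1)).PosSemidef := by
  induction k with
  | zero =>
    have e : (Matrix.of fun i j => A i j ^ (0 + 1)) = A := by ext i j; simp
    rw [e]; exact hA
  | succ k ih =>
    have e : (Matrix.of fun i j => A i j ^ (k + 1 + 1)) =
        Matrix.hadamard (Matrix.of fun i j => A i j ^ (k + 1)) A := by
      ext i j; simp [pow_succ]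
    rw [e]
    exact Matrix.PosSemidef.hadamard (𝕜 := ℝ) ih hA

theorem psd_form {n : ℕ} (A : Matrix (Fin n) (Fin n) ℝ) (hA : A.PosSemidef) (l : Fin n → ℝ) :
    0 ≤ ∑ i, ∑ j, l i * l j * A i j := by
  have := hA.dotProduct_mulVec_nonneg l
  simp only [dotProduct, Matrix.mulVec, Finset.mul_sum] at this
  refine le_of_le_of_eq this ?_
  refine Finset.sum_congr rfl fun i _ => Finset.sum_congr rfl fun j _ => ?_
  simp only [Pi.star_apply, star_trivial]; ring

theorem psd_one_sub {n : ℕ} (A : Matrix (Fin n) (Fin n) ℝ) (hA : A.PosSemidef)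
    (hb : ∀ i j, |A i j| < 1) (t : ℝ) (h0 : 0 ≤ t) (h1 : t ≤ 1) (l : Fin n → ℝ) :
    ∑ i, ∑ j, l i * l j * (1 - A i j) ^ t ≤ (∑ i, l i) ^ 2 := by
  have hs : HasSum (fun k : ℕ => ∑ i, ∑ j, l i * l j * (Ring.choose t k * (-1) ^ k * A i j ^ k))
      (∑ i, ∑ j, l i * l j * (1 - A i j) ^ t) :=
    hasSum_sum fun i _ => hasSum_sum fun j _ => (binom_hasSum t _ (hb i j)).mul_left _
  refine hasSum_le ?_ hs (hasSum_ite_eq 0 ((∑ i, l i) ^ 2))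
  intro k
  rcases k with _ | k
  · simp [sq, Finset.sum_mul_sum]
  · have h2 := psd_form _ (psd_pow A hA k) l
    have h3 := mul_nonpos_of_nonpos_of_nonneg (binom_sign t h0 h1 k) h2
    simp only [Nat.add_eq_zero_iff, one_ne_zero, and_false, if_false]
    refine le_of_eq_of_le ?_ h3
    simp only [Finset.mul_sum, Matrix.of_apply]
    refine Finset.sum_congr rfl fun i _ => Finset.sum_congr rfl fun j _ => by ring

theorem hyp_rpow {X : Type*} {K : X → X → ℝ} (h : IsHypKernel K) (t : ℝ) (h0 : 0 ≤ t)
    (h1 : t ≤ 1) : IsHypKernel (fun x y => K x y ^ t) := by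
  have hp : ∀ x y, 0 < K x y := fun x y => lt_of_lt_of_le one_pos (hyp_one_le h x y)
  refine ⟨fun x y => by simp only [h.1 x y], fun x y => Real.rpow_nonneg (h.2.1 x y) t,
    fun x => by simp [h.2.2.1 x], ?_⟩
  intro n x₀ x l
  let A : Matrix (Fin n) (Fin n) ℝ :=
    Matrix.of fun i j => 1 - K (x i) (x j) / (K x₀ (x i) * K x₀ (x j))
  have hA : A.PosSemidef := by
    refine Matrix.PosSemidef.of_dotProduct_mulVec_nonneg ?_ ?_
    · ext i j
      simp only [A, Matrix.conjTranspose_apply, Matrix.of_apply, star_trivial]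
      rw [h.1 (x i), mul_comm]
    · intro v
      have h2 := h.2.2.2 n x₀ x (fun i => v i / K x₀ (x i))
      have h3 : ∑ k, v k / K x₀ (x k) * K x₀ (x k) = ∑ k, v k :=
        Finset.sum_congr rfl fun k _ => div_mul_cancel₀ _ (hp _ _).ne'
      rw [h3, sq, Finset.sum_mul_sum, ← sub_nonneg, ← Finset.sum_sub_distrib] at h2
      refine le_of_le_of_eq h2 ?_
      simp only [dotProduct, Matrix.mulVec, Finset.mul_sum, ← Finset.sum_sub_distrib]
      refine Finset.sum_congr rfl fun i _ => Finset.sum_congr rfl fun j _ => ?_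
      have := (hp x₀ (x i)).ne'
      have := (hp x₀ (x j)).ne'
      simp only [A, Matrix.of_apply, Pi.star_apply, star_trivial]
      field_simp
  have hb : ∀ i j, |A i j| < 1 := by
    intro i j
    have p := hp x₀ (x i)
    have q := hp x₀ (x j)
    have r := hp (x i) (x j)
    have h2 := h.2.2.2 2 x₀ ![x i, x j] ![K x₀ (x j), K x₀ (x i)]
    simp [Fin.sum_univ_two, h.2.2.1, h.1 (x j) (x i)] at h2
    have h3 : K (x i) (x j) < 2 * (K x₀ (x i) * K x₀ (x j)) := by
      have pq := mul_pos p q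
      by_contra hc
      push Not at hc
      have := mul_le_mul_of_nonneg_left hc pq.le
      nlinarith [mul_pos p p, mul_pos q q]
    have h4 := (div_lt_iff₀ (mul_pos p q)).2 h3
    have h5 := div_pos r (mul_pos p q)
    simp only [A, Matrix.of_apply, abs_lt]
    constructor <;> linarith
  have := psd_one_sub A hA hb t h0 h1 (fun i => l i * K x₀ (x i) ^ t)
  refine le_of_eq_of_le ?_ this
  refine Finset.sum_congr rfl fun i _ => Finset.sum_congr rfl fun j _ => ?_
  have p := hp x₀ (x i)
  have q := hp x₀ (x j)
  have r := hp (x i) (x j)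
  simp only [A, Matrix.of_apply, sub_sub_cancel]
  rw [Real.div_rpow r.le (mul_pos p q).le, Real.mul_rpow p.le q.le]
  have := (Real.rpow_pos_of_pos p t).ne'
  have := (Real.rpow_pos_of_pos q t).ne'
  field_simp

theorem hyp_rpow_of_le {X : Type*} {K : X → X → ℝ} (h : IsHypKernel K) {s t : ℝ} (h0 : 0 ≤ s)
    (hst : s ≤ t) (ht : 0 < t) (hK : IsHypKernel (fun x y => K x y ^ t)) :
    IsHypKernel (fun x y => K x y ^ s) := by
  have := hyp_rpow hK (s / t) (by positivity) ((div_le_one ht).2 hst)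
  convert this using 3 with x y
  rw [← Real.rpow_mul (h.2.1 x y), mul_div_cancel₀ _ ht.ne']

theorem one_le_critExp {X : Type*} {K : X → X → ℝ} (h : IsHypKernel K) :
    ((1 : ℝ) : EReal) ≤ critExp K :=
  le_sSup ⟨1, rfl, le_rfl, by simpa using h⟩

theorem hyp_of_lt_critExp {X : Type*} {K : X → X → ℝ} (h : IsHypKernel K) {s : ℝ} (h0 : 0 ≤ s)
    (hs : (s : EReal) < critExp K) : IsHypKernel (fun x y => K x y ^ s) := by
  obtain ⟨_, ⟨t, rfl, ht, hK⟩, hst⟩ := lt_sSup_iff.1 hs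
  exact hyp_rpow_of_le h h0 (EReal.coe_lt_coe_iff.1 hst).le (by linarith) hK

/-- (a) The critical exponent is upper semicontinuous on `𝓚(X)` (pointwise-convergence
topology); (b) if `t_K < ∞` then `K^{t_K}` is again a kernel of hyperbolic type. -/
theorem critExp_upperSemicontinuous_and_pow_critExp_isHypKernel {X : Type*} :
    UpperSemicontinuous (fun K : {K : X → X → ℝ // IsHypKernel K} => critExp K.1) ∧
    ∀ K : {K : X → X → ℝ // IsHypKernel K}, critExp K.1 < ⊤ →
      IsHypKernel (fun x y => K.1 x y ^ (critExp K.1).toReal) := by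
  constructor
  · intro K c hc
    obtain ⟨s, hs1, hs2⟩ := EReal.lt_iff_exists_real_btwn.1 hc
    have h1 : (1 : ℝ) < s := EReal.coe_lt_coe_iff.1 (lt_of_le_of_lt (one_le_critExp K.2) hs1)
    have hcont : Continuous fun K : {K : X → X → ℝ // IsHypKernel K} =>
        (fun x y => K.1 x y ^ s : X → X → ℝ) := by
      refine continuous_pi fun x => continuous_pi fun y => ?_
      refine (Real.continuous_rpow_const (by linarith)).comp ?_
      exact (continuous_apply y).comp ((continuous_apply x).comp continuous_subtype_val)
    have hop := (hyp_isClosed.preimage hcont).isOpen_compl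
    have hmem : K ∈ ((fun K : {K : X → X → ℝ // IsHypKernel K} =>
        (fun x y => K.1 x y ^ s : X → X → ℝ)) ⁻¹' {K | IsHypKernel K})ᶜ := fun hK =>
      absurd (le_sSup ⟨s, rfl, h1.le, hK⟩ : (s : EReal) ≤ critExp K.1) (not_le.2 hs1)
    filter_upwards [hop.mem_nhds hmem] with L hL
    refine lt_of_le_of_lt ?_ hs2
    by_contra hlt
    exact hL (hyp_of_lt_critExp L.2 (by linarith) (not_le.1 hlt))
  · intro K hK
    have h1 := one_le_critExp K.2
    have hT : ((critExp K.1).toReal : EReal) = critExp K.1 :=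
      EReal.coe_toReal hK.ne (fun hb => by rw [hb] at h1; exact EReal.coe_ne_bot 1 (le_bot_iff.1 h1))
    set T := (critExp K.1).toReal with hTdef
    have hT1 : 1 ≤ T := by rw [← hT] at h1; exact EReal.coe_le_coe_iff.1 h1
    have hcont : Continuous fun s : ℝ => (fun x y => K.1 x y ^ s : X → X → ℝ) := by
      refine continuous_pi fun x => continuous_pi fun y => ?_
      exact Real.continuous_const_rpow
        (lt_of_lt_of_le one_pos (hyp_one_le K.2 x y)).ne'
    have hcl := hyp_isClosed.preimage hcont
    have hsub : Set.Ioo 0 T ⊆ (fun s : ℝ => (fun x y => K.1 x y ^ s : X → X → ℝ)) ⁻¹'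
        {K | IsHypKernel K} := fun s hs => hyp_of_lt_critExp K.2 hs.1.le (by
          rw [← hT]; exact EReal.coe_lt_coe_iff.2 hs.2)
    have := closure_minimal hsub hcl
    rw [closure_Ioo (by linarith)] at this
    exact this ⟨by linarith, le_rfl⟩
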